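/- arXiv:2409.04092 — 3 statements merged into one kernel-verified Lean document; each statement's English description precedes it below -/
import Mathlib

section
/- (Unified consensus error bound, second moment.) Under A1, A3, and A4 with general constants σ₀, σ₁, if sup_{t≥1} γ_t ≤ ρ/(2√(2(σ₁² + 2L²))), then for every t ≥ 0: E_t[‖Θ_o^{t+1}‖_F²] ≤ (1 − ρ/2)‖Θ_o^t‖_F² + (2nγ_{t+1}²/ρ)[(ς² + σ₀²) + 2σ₁²‖θ̄^t − θ*‖²]. -/
open MeasureTheory Filter Matrix
open scoped BigOperators RealInnerProductSpace

set_option linter.unusedVariables false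


/-- the mean minimizes the sum of squared distances -/
lemma aux_var {n d : ℕ} (hn : 0 < n) (x : Fin n → EuclideanSpace ℝ (Fin d))
    (c : EuclideanSpace ℝ (Fin d)) :
    ∑ i, ‖x i - (n : ℝ)⁻¹ • ∑ j, x j‖ ^ 2 ≤ ∑ i, ‖x i - c‖ ^ 2 := by
  set m := (n : ℝ)⁻¹ • ∑ j, x j with hm
  have hn' : (n : ℝ) ≠ 0 := by positivity
  have h0 : ∑ i, (x i - m) = 0 := by
    rw [Finset.sum_sub_distrib, Finset.sum_const, Finset.card_univ, Fintype.card_fin, hm,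
      ← Nat.cast_smul_eq_nsmul ℝ, smul_smul, mul_inv_cancel₀ hn', one_smul, sub_self]
  have h1 : ∀ i, ‖x i - c‖ ^ 2 = ‖x i - m‖ ^ 2 + 2 * ⟪x i - m, m - c⟫ + ‖m - c‖ ^ 2 := by
    intro i
    rw [← norm_add_sq_real]
    congr 2
    abel
  simp_rw [h1, Finset.sum_add_distrib, ← Finset.mul_sum]
  rw [← sum_inner, h0, inner_zero_left]
  have : 0 ≤ ∑ i : Fin n, ‖m - c‖ ^ 2 := by positivity
  linarith

lemma aux_scalar {n : ℕ} (hn : 0 < n) (W : Matrix (Fin n) (Fin n) ℝ)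
    (hWcol : ∀ j, ∑ i, W i j = 1)
    (U : Matrix (Fin n) (Fin n) ℝ) (ρ : ℝ) (hρ1 : ρ ≤ 1)
    (hUU : (1 : Matrix (Fin n) (Fin n) ℝ) - (n : ℝ)⁻¹ • Matrix.of (fun _ _ => (1 : ℝ)) = U * Uᵀ)
    (hUWU : ‖LinearMap.toContinuousLinearMap (Matrix.toEuclideanLin (Uᵀ * W * U))‖ ≤ 1 - ρ)
    (v : Fin n → ℝ) (hv : ∑ i, v i = 0) :
    ∑ i, (∑ j, W i j * v j) ^ 2 ≤ (1 - ρ) ^ 2 * ∑ i, v i ^ 2 := by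
  have hP : ∀ u : Fin n → ℝ, ∑ i, u i = 0 → U *ᵥ (Uᵀ *ᵥ u) = u := by
    intro u hu
    rw [mulVec_mulVec, ← hUU, sub_mulVec, one_mulVec, smul_mulVec]
    have : (Matrix.of (fun _ _ => (1 : ℝ)) : Matrix (Fin n) (Fin n) ℝ) *ᵥ u = 0 := by
      ext i
      simp [mulVec, dotProduct, hu]
    rw [this]; simp
  have hN : ∀ u : Fin n → ℝ, ∑ i, u i = 0 → (Uᵀ *ᵥ u) ⬝ᵥ (Uᵀ *ᵥ u) = u ⬝ᵥ u := by
    intro u hu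
    rw [dotProduct_mulVec, vecMul_transpose, hP u hu]
  have hsq : ∀ u : Fin n → ℝ, u ⬝ᵥ u = ∑ i, u i ^ 2 := by
    intro u; simp [dotProduct, sq]
  set w := W *ᵥ v with hw
  have hw0 : ∑ i, w i = 0 := by
    simp only [hw, mulVec, dotProduct]
    rw [Finset.sum_comm]
    simp_rw [← Finset.sum_mul, hWcol, one_mul, hv]
  set y := (Uᵀ * W * U) *ᵥ (Uᵀ *ᵥ v) with hy
  have hyw : y = Uᵀ *ᵥ w := by
    rw [hy, ← mulVec_mulVec, ← mulVec_mulVec, hP v hv]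
  have hyy : y ⬝ᵥ y = w ⬝ᵥ w := by rw [hyw, hN w hw0]
  have hop : ‖(WithLp.toLp 2 y : EuclideanSpace ℝ (Fin n))‖
      ≤ (1 - ρ) * ‖(WithLp.toLp 2 (Uᵀ *ᵥ v) : EuclideanSpace ℝ (Fin n))‖ := by
    have := (LinearMap.toContinuousLinearMap (Matrix.toEuclideanLin (Uᵀ * W * U))).le_of_opNorm_le
      hUWU (WithLp.toLp 2 (Uᵀ *ᵥ v))
    exact this
  have h2 := pow_le_pow_left₀ (norm_nonneg _) hop 2
  rw [mul_pow, EuclideanSpace.norm_sq_eq, EuclideanSpace.norm_sq_eq] at h2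
  simp only [Real.norm_eq_abs, sq_abs] at h2
  rw [← hsq y, ← hsq (Uᵀ *ᵥ v), hyy, hN v hv, hsq, hsq] at h2
  exact h2

lemma aux_mix {n d : ℕ} (hn : 0 < n) (W : Matrix (Fin n) (Fin n) ℝ)
    (hWcol : ∀ j, ∑ i, W i j = 1)
    (U : Matrix (Fin n) (Fin n) ℝ) (ρ : ℝ) (hρ1 : ρ ≤ 1)
    (hUU : (1 : Matrix (Fin n) (Fin n) ℝ) - (n : ℝ)⁻¹ • Matrix.of (fun _ _ => (1 : ℝ)) = U * Uᵀ)
    (hUWU : ‖LinearMap.toContinuousLinearMap (Matrix.toEuclideanLin (Uᵀ * W * U))‖ ≤ 1 - ρ)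
    (v : Fin n → EuclideanSpace ℝ (Fin d)) (hv : ∑ i, v i = 0) :
    ∑ i, ‖∑ j, W i j • v j‖ ^ 2 ≤ (1 - ρ) ^ 2 * ∑ i, ‖v i‖ ^ 2 := by
  simp_rw [EuclideanSpace.norm_sq_eq, Real.norm_eq_abs, sq_abs]
  rw [Finset.sum_comm, Finset.sum_comm (f := fun i k => (v i) k ^ 2), Finset.mul_sum]
  refine Finset.sum_le_sum fun k _ => ?_
  have h0 : ∑ i, (v i) k = 0 := by
    have := congrArg (fun z : EuclideanSpace ℝ (Fin d) => z k) hv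
    simpa using this
  have := aux_scalar hn W hWcol U ρ hρ1 hUU hUWU (fun i => v i k) h0
  simpa using this

/-- Convexity of the squared norm in the form used for the consensus recursion. -/
lemma aux_convex {n d : ℕ} (X B : Fin n → EuclideanSpace ℝ (Fin d)) (ρ γ c S : ℝ)
    (hρ0 : 0 < ρ) (hρ1 : ρ ≤ 1) (hγ : 0 ≤ γ)
    (hX : ∑ i, ‖X i‖ ^ 2 ≤ (1 - ρ) ^ 2 * c) (hc : 0 ≤ c)
    (hB : ∑ i, ‖B i‖ ^ 2 ≤ S) :
    ∑ i, ‖X i - γ • B i‖ ^ 2 ≤ (1 - ρ) * c + γ ^ 2 / ρ * S := by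
  let x : PiLp 2 (fun _ : Fin n => EuclideanSpace ℝ (Fin d)) := WithLp.toLp 2 X
  let b : PiLp 2 (fun _ : Fin n => EuclideanSpace ℝ (Fin d)) := WithLp.toLp 2 B
  have hx : ‖x‖ ^ 2 = ∑ i, ‖X i‖ ^ 2 := PiLp.norm_sq_eq_of_L2 _ x
  have hb : ‖b‖ ^ 2 = ∑ i, ‖B i‖ ^ 2 := PiLp.norm_sq_eq_of_L2 _ b
  have hxb : ‖x - γ • b‖ ^ 2 = ∑ i, ‖X i - γ • B i‖ ^ 2 := PiLp.norm_sq_eq_of_L2 _ (x - γ • b)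
  rw [← hxb]
  rw [← hx] at hX
  rw [← hb] at hB
  have htri : ‖x - γ • b‖ ≤ ‖x‖ + γ * ‖b‖ := by
    refine (norm_sub_le _ _).trans ?_
    rw [norm_smul, Real.norm_eq_abs, abs_of_nonneg hγ]
  have hxn : ‖x‖ ≤ (1 - ρ) * Real.sqrt c := by
    refine (pow_le_pow_iff_left₀ (norm_nonneg _) (mul_nonneg (by linarith) (Real.sqrt_nonneg _))
      two_ne_zero).1 ?_
    rw [mul_pow, Real.sq_sqrt hc]; exact hX
  set s := Real.sqrt c
  have hs : s ^ 2 = c := Real.sq_sqrt hc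
  set q := γ * ‖b‖ / ρ with hq
  have hqe : γ * ‖b‖ = ρ * q := by rw [hq]; field_simp
  have h1 : ‖x - γ • b‖ ≤ (1 - ρ) * s + ρ * q := by linarith
  have h2 : ‖x - γ • b‖ ^ 2 ≤ ((1 - ρ) * s + ρ * q) ^ 2 := pow_le_pow_left₀ (norm_nonneg _) h1 2
  have h3 : ((1 - ρ) * s + ρ * q) ^ 2 ≤ (1 - ρ) * s ^ 2 + ρ * q ^ 2 := by
    nlinarith [mul_nonneg (mul_nonneg hρ0.le (sub_nonneg.2 hρ1)) (sq_nonneg (s - q))]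
  have h4 : ρ * q ^ 2 = γ ^ 2 / ρ * ‖b‖ ^ 2 := by rw [hq]; field_simp
  have h5 : γ ^ 2 / ρ * ‖b‖ ^ 2 ≤ γ ^ 2 / ρ * S := mul_le_mul_of_nonneg_left hB (by positivity)
  rw [hs] at h3
  linarith

/-- Final numeric estimate. -/
lemma aux_num {L ς σ0 σ1 ρ a n D c V S : ℝ} (hL : 0 < L) (hρ0 : 0 < ρ) (hρ1 : ρ ≤ 1)
    (hapos : 0 < a) (hDn : 0 ≤ n) (hD0 : 0 ≤ D) (hc0 : 0 ≤ c) (hV0 : 0 ≤ V)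
    (hstep : a ≤ ρ / (2 * Real.sqrt (2 * (σ1 ^ 2 + 2 * L ^ 2))))
    (hYs : S ≤ (1 - ρ) * c + a ^ 2 / ρ * (2 * L ^ 2 * c + 2 * n * ς ^ 2))
    (hV : V ≤ 2 * c + 2 * n * D) :
    S + a ^ 2 * (n * σ0 ^ 2 + σ1 ^ 2 * V) ≤ (1 - ρ / 2) * c
        + 2 * n * a ^ 2 / ρ * ((ς ^ 2 + σ0 ^ 2) + 2 * σ1 ^ 2 * D) := by
  -- step size
  have hK : 0 < σ1 ^ 2 + 2 * L ^ 2 := by positivity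
  have hγ2 : a ^ 2 * (8 * (σ1 ^ 2 + 2 * L ^ 2)) ≤ ρ ^ 2 := by
    have k1 := hstep
    have k2 : 0 < 2 * Real.sqrt (2 * (σ1 ^ 2 + 2 * L ^ 2)) := by positivity
    rw [le_div_iff₀ k2] at k1
    have k3 := pow_le_pow_left₀ (by positivity) k1 2
    rw [mul_pow, mul_pow, Real.sq_sqrt (by positivity)] at k3
    linarith
  set q := a ^ 2 / ρ with hq
  have hq0 : 0 ≤ q := by positivity
  have haq : a ^ 2 = q * ρ := by rw [hq]; field_simp
  have hqle : a ^ 2 ≤ q := by rw [haq]; exact mul_le_of_le_one_right hq0 hρ1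
  have hqK : q * (8 * (σ1 ^ 2 + 2 * L ^ 2)) ≤ ρ := by
    rw [haq] at hγ2
    refine le_of_mul_le_mul_right (a := ρ) ?_ hρ0
    linarith
  have hqc : q * (2 * L ^ 2 + 2 * σ1 ^ 2) ≤ ρ / 2 := by
    have k1 : 0 ≤ q * L ^ 2 := by positivity
    have k2 : 0 ≤ q * σ1 ^ 2 := by positivity
    nlinarith
  have hqcc := mul_le_mul_of_nonneg_right hqc hc0
  have hN : a ^ 2 * (n * σ0 ^ 2 + σ1 ^ 2 * V)
      ≤ q * (n * σ0 ^ 2 + σ1 ^ 2 * (2 * c + 2 * n * D)) := by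
    have k1 : σ1 ^ 2 * V ≤ σ1 ^ 2 * (2 * c + 2 * n * D) :=
      mul_le_mul_of_nonneg_left hV (by positivity)
    refine mul_le_mul hqle (by linarith) (by positivity) hq0
  have e : 2 * n * a ^ 2 / ρ = 2 * n * q := by rw [hq]; ring
  rw [e]
  have p1 : 0 ≤ q * (n * σ0 ^ 2) := by positivity
  have p2 : 0 ≤ q * (n * (σ1 ^ 2 * D)) := by positivity
  linarith

set_option maxHeartbeats 1000000 in
theorem stmt6
    {Ω : Type*} [mΩ : MeasurableSpace Ω] (P : Measure Ω) [IsProbabilityMeasure P]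
    (d n : ℕ) (hn : 0 < n)
    (fi : Fin n → EuclideanSpace ℝ (Fin d) → ℝ)
    (hfi : ∀ i, ContDiff ℝ 2 (fi i))
    (f : EuclideanSpace ℝ (Fin d) → ℝ)
    (hf : ∀ x, f x = (∑ i, fi i x) / n)
    (L ς : ℝ) (hL : 0 < L) (hς : 0 ≤ ς)
    (hlip : ∀ i x y, ‖gradient (fi i) x - gradient (fi i) y‖ ≤ L * ‖x - y‖)
    (hhet : ∀ i x, ‖gradient f x - gradient (fi i) x‖ ≤ ς)
    (W : Matrix (Fin n) (Fin n) ℝ)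
    (hWnn : ∀ i j, 0 ≤ W i j)
    (hWrow : ∀ i, ∑ j, W i j = 1) (hWcol : ∀ j, ∑ i, W i j = 1)
    (U : Matrix (Fin n) (Fin n) ℝ) (ρ : ℝ) (hρ0 : 0 < ρ) (hρ1 : ρ ≤ 1)
    (hUU : (1 : Matrix (Fin n) (Fin n) ℝ) - (n : ℝ)⁻¹ • Matrix.of (fun _ _ => (1 : ℝ)) = U * Uᵀ)
    (hUWU : ‖LinearMap.toContinuousLinearMap (Matrix.toEuclideanLin (Uᵀ * W * U))‖ ≤ 1 - ρ)
    (γ : ℕ → ℝ) (hγpos : ∀ t, 0 < γ t)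
    (θ : ℕ → Fin n → Ω → EuclideanSpace ℝ (Fin d))
    (g : ℕ → Fin n → Ω → EuclideanSpace ℝ (Fin d))
    (θ0 : Fin n → EuclideanSpace ℝ (Fin d)) (hθ0 : ∀ i ω, θ 0 i ω = θ0 i)
    (hrec : ∀ t i ω, θ (t + 1) i ω = ∑ j, W i j • θ t j ω - γ (t + 1) • g t i ω)
    (θb : ℕ → Ω → EuclideanSpace ℝ (Fin d))
    (hθb : ∀ t ω, θb t ω = (n : ℝ)⁻¹ • ∑ i, θ t i ω)
    (C : ℕ → Ω → ℝ)
    (hC : ∀ t ω, C t ω = ∑ i, ‖θ t i ω - θb t ω‖ ^ 2)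
    (ℱ : ℕ → MeasurableSpace Ω) (hℱ : ∀ t, ℱ t ≤ mΩ)
    (hadapt : ∀ t i, StronglyMeasurable[ℱ t] (θ t i))
    (hgmeas : ∀ t i, StronglyMeasurable (g t i))
    (hgL2 : ∀ t i, Integrable (fun ω => ‖g t i ω‖ ^ 2) P)
    (θstar : EuclideanSpace ℝ (Fin d)) (hmin : ∀ x, f θstar ≤ f x)
    (σ0 σ1 : ℝ) (hσ0 : 0 ≤ σ0) (hσ1 : 0 ≤ σ1)
    (hunb : ∀ t i, P[(fun ω => g t i ω) | ℱ t] =ᵐ[P] fun ω => gradient (fi i) (θ t i ω))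
    (hvar : ∀ t i, P[(fun ω => ‖g t i ω - gradient (fi i) (θ t i ω)‖ ^ 2) | ℱ t]
        ≤ᵐ[P] fun ω => σ0 ^ 2 + σ1 ^ 2 * ‖θ t i ω - θstar‖ ^ 2)
    (hstep : ∀ t : ℕ, 1 ≤ t → γ t ≤ ρ / (2 * Real.sqrt (2 * (σ1 ^ 2 + 2 * L ^ 2)))) :
    ∀ t : ℕ, P[(fun ω => C (t + 1) ω) | ℱ t] ≤ᵐ[P]
      fun ω => (1 - ρ / 2) * C t ω
        + 2 * (n : ℝ) * γ (t + 1) ^ 2 / ρ * ((ς ^ 2 + σ0 ^ 2) + 2 * σ1 ^ 2 * ‖θb t ω - θstar‖ ^ 2) := by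
  intro t
  have hmono : ∀ i, Continuous (gradient (fi i)) := fun i =>
    (LipschitzWith.of_dist_le_mul (K := L.toNNReal) (fun x y => by
      rw [dist_eq_norm, dist_eq_norm, Real.coe_toNNReal _ hL.le]; exact hlip i x y)).continuous
  -- square integrability
  have hg2 : ∀ t i, MemLp (g t i) 2 P := fun t i =>
    (memLp_two_iff_integrable_sq_norm (hgmeas t i).aestronglyMeasurable).2 (hgL2 t i)
  have hθ2 : ∀ t i, MemLp (θ t i) 2 P := by
    intro t
    induction t with
    | zero =>
      intro i
      have : θ 0 i = fun _ => θ0 i := funext (hθ0 i)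
      rw [this]; exact memLp_const _
    | succ t ih =>
      intro i
      have : θ (t + 1) i = fun ω => ∑ j, W i j • θ t j ω - γ (t + 1) • g t i ω :=
        funext (hrec t i)
      rw [this]
      exact (memLp_finsetSum _ (fun j _ => (ih j).const_smul (W i j))).sub
        ((hg2 t i).const_smul (γ (t + 1)))
  have hmmeas : ∀ i, StronglyMeasurable[ℱ t] (fun ω => gradient (fi i) (θ t i ω)) := fun i =>
    (hmono i).comp_stronglyMeasurable (hadapt t i)
  have hm2 : ∀ i, MemLp (fun ω => gradient (fi i) (θ t i ω)) 2 P := by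
    intro i
    have h1 : MemLp (fun ω => gradient (fi i) (θ t i ω) - gradient (fi i) 0) 2 P := by
      refine MemLp.of_le_mul (c := L) (hθ2 t i) ?_ ?_
      · exact (((hmmeas i).mono (hℱ t)).sub stronglyMeasurable_const).aestronglyMeasurable
      · refine Eventually.of_forall fun ω => ?_
        simpa using hlip i (θ t i ω) 0
    have h2 := h1.add (memLp_const (gradient (fi i) 0))
    refine h2.congr_norm ((hmmeas i).mono (hℱ t)).aestronglyMeasurable ?_
    exact Eventually.of_forall fun ω => by simp
  -- noise and noiseless update
  set a := γ (t + 1) with ha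
  have hapos : 0 < a := hγpos _
  let ξ : Fin n → Ω → EuclideanSpace ℝ (Fin d) := fun i ω => g t i ω - gradient (fi i) (θ t i ω)
  let z : Fin n → Ω → EuclideanSpace ℝ (Fin d) :=
    fun i ω => ∑ j, W i j • θ t j ω - a • gradient (fi i) (θ t i ω)
  let Y : Fin n → Ω → EuclideanSpace ℝ (Fin d) :=
    fun i ω => z i ω - (n : ℝ)⁻¹ • ∑ j, z j ω
  have hξ2 : ∀ i, MemLp (ξ i) 2 P := fun i => (hg2 t i).sub (hm2 i)
  have hz2 : ∀ i, MemLp (z i) 2 P := fun i =>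
    (memLp_finsetSum _ (fun j _ => (hθ2 t j).const_smul (W i j))).sub ((hm2 i).const_smul a)
  have hY2 : ∀ i, MemLp (Y i) 2 P := fun i =>
    (hz2 i).sub ((memLp_finsetSum Finset.univ (fun j _ => hz2 j)).const_smul (n : ℝ)⁻¹)
  have hzm : ∀ i, StronglyMeasurable[ℱ t] (z i) := fun i =>
    (Finset.stronglyMeasurable_fun_sum _ (fun j _ => (hadapt t j).const_smul (W i j))).sub
      ((hmmeas i).const_smul a)
  have hYm : ∀ i, StronglyMeasurable[ℱ t] (Y i) := fun i =>
    (hzm i).sub ((Finset.stronglyMeasurable_fun_sum Finset.univ (fun j _ => hzm j)).const_smul (n : ℝ)⁻¹)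
  -- conditional mean zero noise
  have hξ0 : ∀ i, P[ξ i | ℱ t] =ᵐ[P] 0 := by
    intro i
    have h1 := condExp_sub ((hg2 t i).integrable one_le_two) ((hm2 i).integrable one_le_two) (ℱ t)
    have h2 := condExp_of_stronglyMeasurable (hℱ t) (hmmeas i) ((hm2 i).integrable one_le_two)
    have h3 : P[ξ i | ℱ t] =ᵐ[P] P[g t i | ℱ t]
      - P[fun ω => gradient (fi i) (θ t i ω) | ℱ t] := h1
    filter_upwards [h3, hunb t i] with ω h4 h5
    rw [h4, Pi.sub_apply, h2]
    simp only [Pi.zero_apply]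
    rw [sub_eq_zero]
    exact h5
  have hξsq : ∀ i, Integrable (fun ω => ‖ξ i ω‖ ^ 2) P := fun i =>
    (memLp_two_iff_integrable_sq_norm (hξ2 i).1).1 (hξ2 i)
  have hYsq : ∀ i, Integrable (fun ω => ‖Y i ω‖ ^ 2) P := fun i =>
    (memLp_two_iff_integrable_sq_norm (hY2 i).1).1 (hY2 i)
  have hYξint : ∀ i, Integrable (fun ω => ⟪Y i ω, ξ i ω⟫) P := by
    intro i
    refine Integrable.mono' ((hYsq i).add (hξsq i)) ((hY2 i).1.inner (hξ2 i).1)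
      (Eventually.of_forall fun ω => ?_)
    refine (norm_inner_le_norm _ _).trans ?_
    rw [Pi.add_apply]
    nlinarith [sq_nonneg (‖Y i ω‖ - ‖ξ i ω‖), sq_nonneg ‖Y i ω‖, sq_nonneg ‖ξ i ω‖]
  have hcross : ∀ i, P[(fun ω => ⟪Y i ω, ξ i ω⟫) | ℱ t] =ᵐ[P] 0 := by
    intro i
    have h1 := condExp_bilin_of_stronglyMeasurable_left (innerSL ℝ) (μ := P) (hYm i)
      (g := ξ i) (hYξint i) ((hξ2 i).integrable one_le_two)
    filter_upwards [h1, hξ0 i] with ω h2 h3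
    refine h2.trans ?_
    rw [h3]; simp
  -- pointwise bound on the next consensus error
  have hpt : ∀ ω, C (t + 1) ω ≤
      ∑ i, (‖Y i ω‖ ^ 2 + ((-(2 * a)) * ⟪Y i ω, ξ i ω⟫ + a ^ 2 * ‖ξ i ω‖ ^ 2)) := by
    intro ω
    rw [hC, hθb]
    refine (aux_var hn (fun i => θ (t + 1) i ω) ((n : ℝ)⁻¹ • ∑ j, z j ω)).trans ?_
    refine Finset.sum_le_sum fun i _ => le_of_eq ?_
    have h1 : θ (t + 1) i ω - (n : ℝ)⁻¹ • ∑ j, z j ω = Y i ω - a • ξ i ω := by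
      rw [hrec]
      simp only [Y, ξ, z, smul_sub, ← ha]
      abel
    rw [h1, norm_sub_sq_real, inner_smul_right, norm_smul, mul_pow, Real.norm_eq_abs, sq_abs]
    ring
  have hCint : Integrable (fun ω => C (t + 1) ω) P := by
    have hb2 : MemLp (θb (t + 1)) 2 P := by
      have : θb (t + 1) = fun ω => (n : ℝ)⁻¹ • ∑ i, θ (t + 1) i ω := funext (hθb _)
      rw [this]
      exact (memLp_finsetSum _ (fun j _ => hθ2 (t + 1) j)).const_smul (n : ℝ)⁻¹
    have : (fun ω => C (t + 1) ω) = fun ω => ∑ i, ‖θ (t + 1) i ω - θb (t + 1) ω‖ ^ 2 :=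
      funext (hC _)
    rw [this]
    refine integrable_finsetSum _ fun i _ => ?_
    have h := (hθ2 (t + 1) i).sub hb2
    exact (memLp_two_iff_integrable_sq_norm h.1).1 h
  have hint1 : ∀ i, Integrable (fun ω => (-(2 * a)) * ⟪Y i ω, ξ i ω⟫) P :=
    fun i => (hYξint i).const_mul _
  have hint2 : ∀ i, Integrable (fun ω => a ^ 2 * ‖ξ i ω‖ ^ 2) P := fun i => (hξsq i).const_mul _
  have hint : ∀ i, Integrable
      (fun ω => ‖Y i ω‖ ^ 2 + ((-(2 * a)) * ⟪Y i ω, ξ i ω⟫ + a ^ 2 * ‖ξ i ω‖ ^ 2)) P :=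
    fun i => (hYsq i).add ((hint1 i).add (hint2 i))
  have hmon := condExp_mono (m := ℱ t) hCint
    (integrable_finsetSum Finset.univ (fun i _ => hint i)) (Eventually.of_forall hpt)
  have hterm : ∀ i, P[(fun ω => ‖Y i ω‖ ^ 2 + ((-(2 * a)) * ⟪Y i ω, ξ i ω⟫
      + a ^ 2 * ‖ξ i ω‖ ^ 2)) | ℱ t] ≤ᵐ[P]
      fun ω => ‖Y i ω‖ ^ 2 + a ^ 2 * (σ0 ^ 2 + σ1 ^ 2 * ‖θ t i ω - θstar‖ ^ 2) := by
    intro i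
    have e1 := condExp_add (hYsq i) ((hint1 i).add (hint2 i)) (ℱ t)
    have e2 := condExp_add (hint1 i) (hint2 i) (ℱ t)
    have e3 := condExp_smul (μ := P) (-(2 * a)) (fun ω => ⟪Y i ω, ξ i ω⟫) (ℱ t)
    have e4 := condExp_smul (μ := P) (a ^ 2) (fun ω => ‖ξ i ω‖ ^ 2) (ℱ t)
    have e5 := condExp_of_stronglyMeasurable (hℱ t) ((hYm i).norm.pow 2) (hYsq i)
    filter_upwards [e1, e2, e3, e4, hcross i, hvar t i] with ω h1 h2 h3 h4 h6 h7
    refine h1.le.trans ?_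
    rw [Pi.add_apply]
    refine add_le_add (le_of_eq (congrFun e5 ω)) ?_
    refine h2.le.trans ?_
    rw [Pi.add_apply]
    refine (add_le_add h3.le h4.le).trans ?_
    rw [Pi.smul_apply, Pi.smul_apply, h6]
    simp only [Pi.zero_apply, smul_eq_mul, mul_zero, zero_add]
    exact mul_le_mul_of_nonneg_left h7 (by positivity)
  have hsum := condExp_finsetSum (μ := P) (s := Finset.univ) (fun i _ => hint i) (ℱ t)
  have hall : ∀ᵐ ω ∂P, ∀ i, (P[(fun ω => ‖Y i ω‖ ^ 2 + ((-(2 * a)) * ⟪Y i ω, ξ i ω⟫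
      + a ^ 2 * ‖ξ i ω‖ ^ 2)) | ℱ t]) ω ≤
      ‖Y i ω‖ ^ 2 + a ^ 2 * (σ0 ^ 2 + σ1 ^ 2 * ‖θ t i ω - θstar‖ ^ 2) :=
    ae_all_iff.2 hterm
  have hfun : (∑ i, fun ω => ‖Y i ω‖ ^ 2 + ((-(2 * a)) * ⟪Y i ω, ξ i ω⟫
      + a ^ 2 * ‖ξ i ω‖ ^ 2)) = fun ω => ∑ i, (‖Y i ω‖ ^ 2 + ((-(2 * a)) * ⟪Y i ω, ξ i ω⟫
      + a ^ 2 * ‖ξ i ω‖ ^ 2)) := by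
    ext ω; simp only [Finset.sum_apply]
  rw [hfun] at hsum
  filter_upwards [hmon, hsum, hall] with ω h1 h2 h3
  refine h1.trans (h2.le.trans ?_)
  rw [Finset.sum_apply]
  refine (Finset.sum_le_sum fun i _ => h3 i).trans ?_
  -- deterministic estimate at ω
  have hn' : (n : ℝ) ≠ 0 := by positivity
  set c := C t ω with hc
  have hcdef : c = ∑ i, ‖θ t i ω - θb t ω‖ ^ 2 := hC t ω
  have hc0 : 0 ≤ c := by rw [hcdef]; positivity
  have hcen : ∑ i, (θ t i ω - θb t ω) = 0 := by
    rw [Finset.sum_sub_distrib, Finset.sum_const, Finset.card_univ, Fintype.card_fin, hθb,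
      ← Nat.cast_smul_eq_nsmul ℝ, smul_smul, mul_inv_cancel₀ hn', one_smul, sub_self]
  have hX := aux_mix hn W hWcol U ρ hρ1 hUU hUWU (fun i => θ t i ω - θb t ω) hcen
  have hB : ∑ i, ‖gradient (fi i) (θ t i ω) - gradient f (θb t ω)‖ ^ 2
      ≤ 2 * L ^ 2 * c + 2 * n * ς ^ 2 := by
    have : ∀ i, ‖gradient (fi i) (θ t i ω) - gradient f (θb t ω)‖ ^ 2
        ≤ 2 * L ^ 2 * ‖θ t i ω - θb t ω‖ ^ 2 + 2 * ς ^ 2 := by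
      intro i
      have k1 := hlip i (θ t i ω) (θb t ω)
      have k2 := hhet i (θb t ω)
      rw [norm_sub_rev] at k2
      have k3 := norm_sub_le_norm_sub_add_norm_sub (gradient (fi i) (θ t i ω))
        (gradient (fi i) (θb t ω)) (gradient f (θb t ω))
      have k4 := pow_le_pow_left₀ (norm_nonneg _) (k3.trans (add_le_add k1 k2)) 2
      nlinarith [sq_nonneg (L * ‖θ t i ω - θb t ω‖ - ς)]
    refine (Finset.sum_le_sum fun i _ => this i).trans (le_of_eq ?_)
    rw [Finset.sum_add_distrib, ← Finset.mul_sum, ← hcdef, Finset.sum_const, Finset.card_univ,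
      Fintype.card_fin, nsmul_eq_mul]
    ring
  have hYs : ∑ i, ‖Y i ω‖ ^ 2 ≤ (1 - ρ) * c + a ^ 2 / ρ * (2 * L ^ 2 * c + 2 * n * ς ^ 2) := by
    refine (aux_var hn (fun i => z i ω) (θb t ω - a • gradient f (θb t ω))).trans ?_
    refine le_trans (le_of_eq ?_) (aux_convex (fun i => ∑ j, W i j • (θ t j ω - θb t ω))
      (fun i => gradient (fi i) (θ t i ω) - gradient f (θb t ω)) ρ a c _ hρ0 hρ1 hapos.le
      (by rw [hcdef]; exact hX) hc0 hB)
    refine Finset.sum_congr rfl fun i _ => ?_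
    congr 2
    simp only [z, smul_sub, Finset.sum_sub_distrib]
    rw [← Finset.sum_smul, hWrow, one_smul]
    abel
  have hV : ∑ i, ‖θ t i ω - θstar‖ ^ 2 ≤ 2 * c + 2 * n * ‖θb t ω - θstar‖ ^ 2 := by
    have : ∀ i, ‖θ t i ω - θstar‖ ^ 2
        ≤ 2 * ‖θ t i ω - θb t ω‖ ^ 2 + 2 * ‖θb t ω - θstar‖ ^ 2 := by
      intro i
      have k3 := norm_sub_le_norm_sub_add_norm_sub (θ t i ω) (θb t ω) θstar
      have k4 := pow_le_pow_left₀ (norm_nonneg _) k3 2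
      nlinarith [sq_nonneg (‖θ t i ω - θb t ω‖ - ‖θb t ω - θstar‖)]
    refine (Finset.sum_le_sum fun i _ => this i).trans (le_of_eq ?_)
    rw [Finset.sum_add_distrib, ← Finset.mul_sum, ← hcdef, Finset.sum_const, Finset.card_univ,
      Fintype.card_fin, nsmul_eq_mul]
    ring
  rw [Finset.sum_add_distrib, ← Finset.mul_sum, Finset.sum_add_distrib, ← Finset.mul_sum,
    Finset.sum_const, Finset.card_univ, Fintype.card_fin, nsmul_eq_mul]
  have hV0 : 0 ≤ ∑ i, ‖θ t i ω - θstar‖ ^ 2 := by positivity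
  exact aux_num hL hρ0 hρ1 hapos (Nat.cast_nonneg n) (by positivity) hc0 hV0 (hstep (t + 1) (by omega)) hYs hV
end

section
/- (Key high-order deviation bound.) Let f_1, …, f_n : ℝ^d → ℝ be twice continuously differentiable with f = (1/n)∑_{i=1}^n f_i, and suppose ‖∇²f(θ) − ∇²f_i(θ)‖ ≤ ς_H for all θ and i (A5), and each Hessian ∇²f_i is L_H-Lipschitz in operator norm (A6). Then for any points θ_1, …, θ_n ∈ ℝ^d, with θ̄ = (1/n)∑_{i=1}^n θ_i and S² := ∑_{i=1}^n ‖θ_i − θ̄‖², one has ‖(1/n)∑_{i=1}^n (∇f_i(θ_i) − ∇f_i(θ̄))‖² ≤ (L_H²/(2n²))·S⁴ + (2ς_H²/n)·S². -/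
open MeasureTheory Filter Matrix
open scoped BigOperators RealInnerProductSpace

set_option linter.unusedVariables false

theorem taylor_aux {E : Type*} [NormedAddCommGroup E] [NormedSpace ℝ E]
    (g : E → E) (hg : Differentiable ℝ g) (L : ℝ)
    (hL : ∀ x y, ‖fderiv ℝ g x - fderiv ℝ g y‖ ≤ L * ‖x - y‖) (x u : E) :
    ‖g (x + u) - g x - fderiv ℝ g x u‖ ≤ L / 2 * ‖u‖ ^ 2 := by
  have hφ : ∀ t : ℝ, HasDerivAt (fun t : ℝ => g (x + t • u) - g x - t • fderiv ℝ g x u)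
      (fderiv ℝ g (x + t • u) u - fderiv ℝ g x u) t := by
    intro t
    have h1 : HasDerivAt (fun t : ℝ => x + t • u) u t := by
      simpa using ((hasDerivAt_id t).smul_const u).const_add x
    have h2 := (hg (x + t • u)).hasFDerivAt.comp_hasDerivAt t h1
    have h3 : HasDerivAt (fun t : ℝ => t • fderiv ℝ g x u) (fderiv ℝ g x u) t := by
      simpa using (hasDerivAt_id t).smul_const (fderiv ℝ g x u)
    exact (h2.sub_const (g x)).sub h3
  have hB : ∀ t : ℝ, HasDerivAt (fun t : ℝ => L / 2 * ‖u‖ ^ 2 * t ^ 2) (L * ‖u‖ ^ 2 * t) t := by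
    intro t
    refine ((hasDerivAt_pow 2 t).const_mul (L / 2 * ‖u‖ ^ 2)).congr_deriv ?_
    norm_num
    ring
  have := image_norm_le_of_norm_deriv_right_le_deriv_boundary (a := 0) (b := 1)
    (fun t _ => (hφ t).continuousAt.continuousWithinAt)
    (fun t _ => (hφ t).hasDerivWithinAt) (by simp) hB
    (by
      intro t ht
      rw [← _root_.sub_apply]
      refine (ContinuousLinearMap.le_opNorm _ _).trans ?_
      have h := hL (x + t • u) x
      rw [add_sub_cancel_left, norm_smul, Real.norm_of_nonneg ht.1] at h
      calc _ ≤ L * (t * ‖u‖) * ‖u‖ := by gcongr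
        _ = _ := by ring)
    (x := 1) (by simp)
  simpa using this

theorem stmt15
    (d n : ℕ) (hn : 0 < n)
    (fi : Fin n → EuclideanSpace ℝ (Fin d) → ℝ)
    (hfi : ∀ i, ContDiff ℝ 2 (fi i))
    (f : EuclideanSpace ℝ (Fin d) → ℝ)
    (hf : ∀ x, f x = (∑ i, fi i x) / n)
    (ςH : ℝ) (hςH : 0 ≤ ςH)
    (hhessSim : ∀ i x, ‖fderiv ℝ (gradient f) x - fderiv ℝ (gradient (fi i)) x‖ ≤ ςH)
    (LH : ℝ) (hLH : 0 ≤ LH)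
    (hhessLip : ∀ i x y,
      ‖fderiv ℝ (gradient (fi i)) x - fderiv ℝ (gradient (fi i)) y‖ ≤ LH * ‖x - y‖)
    (θi : Fin n → EuclideanSpace ℝ (Fin d))
    (θbar : EuclideanSpace ℝ (Fin d)) (hθbar : θbar = (n : ℝ)⁻¹ • ∑ i, θi i)
    (S2 : ℝ) (hS2 : S2 = ∑ i, ‖θi i - θbar‖ ^ 2) :
    ‖(n : ℝ)⁻¹ • ∑ i, (gradient (fi i) (θi i) - gradient (fi i) θbar)‖ ^ 2 ≤
      LH ^ 2 / (2 * (n : ℝ) ^ 2) * S2 ^ 2 + 2 * ςH ^ 2 / (n : ℝ) * S2 := by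
  have hnR : (0 : ℝ) < n := by exact_mod_cast hn
  have hg : ∀ i, Differentiable ℝ (gradient (fi i)) := by
    intro i
    have h1 : Differentiable ℝ (fderiv ℝ (fi i)) :=
      ((hfi i).fderiv_right (m := 1) (by norm_num)).differentiable (by norm_num)
    exact (InnerProductSpace.toDual ℝ (EuclideanSpace ℝ (Fin d))).symm.toContinuousLinearEquiv.differentiable.comp h1
  have hu : ∑ i, (θi i - θbar) = 0 := by
    rw [Finset.sum_sub_distrib, hθbar]
    simp only [Finset.sum_const, Finset.card_univ, Fintype.card_fin]
    rw [← Nat.cast_smul_eq_nsmul ℝ, smul_inv_smul₀ hnR.ne', sub_self]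
  set H := fderiv ℝ (gradient f) θbar with hH
  have hb : ∀ i, ‖gradient (fi i) (θi i) - gradient (fi i) θbar - H (θi i - θbar)‖ ≤
      LH / 2 * ‖θi i - θbar‖ ^ 2 + ςH * ‖θi i - θbar‖ := by
    intro i
    have h1 := taylor_aux _ (hg i) LH (hhessLip i) θbar (θi i - θbar)
    rw [add_sub_cancel] at h1
    have h2 := ((H - fderiv ℝ (gradient (fi i)) θbar).le_of_opNorm_le (hhessSim i θbar)
      (θi i - θbar))
    rw [_root_.sub_apply] at h2
    have h3 := norm_sub_le_of_le h1 h2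
    refine le_trans (le_of_eq ?_) h3
    congr 1
    abel
  have hsum : ∑ i, (gradient (fi i) (θi i) - gradient (fi i) θbar) =
      ∑ i, (gradient (fi i) (θi i) - gradient (fi i) θbar - H (θi i - θbar)) := by
    rw [Finset.sum_sub_distrib (g := fun i => H (θi i - θbar)), ← map_sum, hu, map_zero, sub_zero]
  have hN : ‖∑ i, (gradient (fi i) (θi i) - gradient (fi i) θbar)‖ ≤
      LH / 2 * S2 + ςH * ∑ i, ‖θi i - θbar‖ := by
    rw [hsum, hS2, Finset.mul_sum, Finset.mul_sum, ← Finset.sum_add_distrib]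
    exact norm_sum_le_of_le _ fun i _ => hb i
  have hCS : (∑ i, ‖θi i - θbar‖) ^ 2 ≤ n * S2 := by
    rw [hS2]
    simpa using sq_sum_le_card_mul_sum_sq (s := Finset.univ) (f := fun i => ‖θi i - θbar‖)
  generalize (∑ i, ‖θi i - θbar‖) = T at *
  rw [norm_smul, mul_pow, norm_inv, Real.norm_of_nonneg hnR.le]
  have hsq := pow_le_pow_left₀ (norm_nonneg _) hN 2
  have hfin : (LH / 2 * S2 + ςH * T) ^ 2 ≤ LH ^ 2 / 2 * S2 ^ 2 + 2 * ςH ^ 2 * (n * S2) := by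
    have := mul_le_mul_of_nonneg_left hCS (sq_nonneg ςH)
    nlinarith [sq_nonneg (LH / 2 * S2 - ςH * T)]
  calc _ ≤ ((n : ℝ)⁻¹) ^ 2 * (LH ^ 2 / 2 * S2 ^ 2 + 2 * ςH ^ 2 * (n * S2)) := by
        gcongr
        exact hsq.trans hfin
    _ = _ := by field_simp
end

section
/- (Second-moment bound on the projected stochastic gradient matrix, eq. (eq4).) Under A1 and A4 with general constants σ₀, σ₁, at each DSGD iteration t let g_i := ∇ℓ_i(θ_i^t; Z_i^{t+1}) and ḡ := (1/n)∑_{j=1}^n g_j. Then E_t[∑_{i=1}^n ‖g_i − ḡ‖²] ≤ 2n(σ₀² + ς²) + 4nσ₁²‖θ̄^t − θ*‖² + 4(σ₁² + 2L²)‖Θ_o^t‖_F². -/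
open MeasureTheory Filter Matrix
open scoped BigOperators RealInnerProductSpace

set_option linter.unusedVariables false

theorem aux_var_min {E : Type*} [NormedAddCommGroup E] [InnerProductSpace ℝ E] {n : ℕ}
    (hn : 0 < n) (x : Fin n → E) (c : E) :
    ∑ i, ‖x i - c‖ ^ 2 = ∑ i, ‖x i - (n : ℝ)⁻¹ • ∑ j, x j‖ ^ 2
      + n * ‖(n : ℝ)⁻¹ • ∑ j, x j - c‖ ^ 2 := by
  have hn' : (n : ℝ) ≠ 0 := by positivity
  set b : E := (n : ℝ)⁻¹ • ∑ j, x j with hb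
  have h0 : ∑ i, (x i - b) = 0 := by
    rw [Finset.sum_sub_distrib, Finset.sum_const, Finset.card_univ, Fintype.card_fin,
      ← Nat.cast_smul_eq_nsmul ℝ, hb, smul_smul, mul_inv_cancel₀ hn', one_smul, sub_self]
  have h1 : ∀ i, ‖x i - c‖ ^ 2 = ‖x i - b‖ ^ 2 + 2 * inner ℝ (x i - b) (b - c) + ‖b - c‖ ^ 2 := by
    intro i
    rw [← norm_add_sq_real, sub_add_sub_cancel]
  simp_rw [h1]
  rw [Finset.sum_add_distrib, Finset.sum_add_distrib, ← Finset.mul_sum, ← sum_inner, h0]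
  simp

theorem aux_inner_int {Ω E : Type*} [MeasurableSpace Ω] {P : Measure Ω}
    [NormedAddCommGroup E] [InnerProductSpace ℝ E] {u v : Ω → E}
    (hu : MemLp u 2 P) (hv : MemLp v 2 P) : Integrable (fun ω => inner ℝ (u ω) (v ω)) P := by
  refine Integrable.mono' ((hu.integrable_norm_pow (by norm_num)).add
    (hv.integrable_norm_pow (by norm_num))) (hu.1.inner hv.1) (ae_of_all _ fun ω => ?_)
  have := norm_inner_le_norm (𝕜 := ℝ) (u ω) (v ω)
  simp only [Pi.add_apply]
  nlinarith [sq_nonneg (‖u ω‖ - ‖v ω‖), sq_nonneg (‖u ω‖), sq_nonneg (‖v ω‖)]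

theorem stmt17
    {Ω : Type*} [mΩ : MeasurableSpace Ω] (P : Measure Ω) [IsProbabilityMeasure P]
    (d n : ℕ) (hn : 0 < n)
    (fi : Fin n → EuclideanSpace ℝ (Fin d) → ℝ)
    (hfi : ∀ i, ContDiff ℝ 2 (fi i))
    (f : EuclideanSpace ℝ (Fin d) → ℝ)
    (hf : ∀ x, f x = (∑ i, fi i x) / n)
    (L ς : ℝ) (hL : 0 < L) (hς : 0 ≤ ς)
    (hlip : ∀ i x y, ‖gradient (fi i) x - gradient (fi i) y‖ ≤ L * ‖x - y‖)
    (hhet : ∀ i x, ‖gradient f x - gradient (fi i) x‖ ≤ ς)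
    (W : Matrix (Fin n) (Fin n) ℝ)
    (hWnn : ∀ i j, 0 ≤ W i j)
    (hWrow : ∀ i, ∑ j, W i j = 1) (hWcol : ∀ j, ∑ i, W i j = 1)
    (γ : ℕ → ℝ) (hγpos : ∀ t, 0 < γ t)
    (θ : ℕ → Fin n → Ω → EuclideanSpace ℝ (Fin d))
    (g : ℕ → Fin n → Ω → EuclideanSpace ℝ (Fin d))
    (θ0 : Fin n → EuclideanSpace ℝ (Fin d)) (hθ0 : ∀ i ω, θ 0 i ω = θ0 i)
    (hrec : ∀ t i ω, θ (t + 1) i ω = ∑ j, W i j • θ t j ω - γ (t + 1) • g t i ω)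
    (θb : ℕ → Ω → EuclideanSpace ℝ (Fin d))
    (hθb : ∀ t ω, θb t ω = (n : ℝ)⁻¹ • ∑ i, θ t i ω)
    (C : ℕ → Ω → ℝ)
    (hC : ∀ t ω, C t ω = ∑ i, ‖θ t i ω - θb t ω‖ ^ 2)
    (ℱ : ℕ → MeasurableSpace Ω) (hℱ : ∀ t, ℱ t ≤ mΩ)
    (hadapt : ∀ t i, StronglyMeasurable[ℱ t] (θ t i))
    (hgmeas : ∀ t i, StronglyMeasurable (g t i))
    (hgL2 : ∀ t i, Integrable (fun ω => ‖g t i ω‖ ^ 2) P)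
    (θstar : EuclideanSpace ℝ (Fin d)) (hmin : ∀ x, f θstar ≤ f x)
    (σ0 σ1 : ℝ) (hσ0 : 0 ≤ σ0) (hσ1 : 0 ≤ σ1)
    (hunb : ∀ t i, P[(fun ω => g t i ω) | ℱ t] =ᵐ[P] fun ω => gradient (fi i) (θ t i ω))
    (hvar : ∀ t i, P[(fun ω => ‖g t i ω - gradient (fi i) (θ t i ω)‖ ^ 2) | ℱ t]
        ≤ᵐ[P] fun ω => σ0 ^ 2 + σ1 ^ 2 * ‖θ t i ω - θstar‖ ^ 2)
    : ∀ t : ℕ, P[(fun ω => ∑ i, ‖g t i ω - (n : ℝ)⁻¹ • ∑ j, g t j ω‖ ^ 2) | ℱ t] ≤ᵐ[P]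
      fun ω => 2 * (n : ℝ) * (σ0 ^ 2 + ς ^ 2) + 4 * (n : ℝ) * σ1 ^ 2 * ‖θb t ω - θstar‖ ^ 2
        + 4 * (σ1 ^ 2 + 2 * L ^ 2) * C t ω := by
  intro t
  have hn' : (0 : ℝ) < n := by exact_mod_cast hn
  set m : Fin n → Ω → EuclideanSpace ℝ (Fin d) := fun i ω => gradient (fi i) (θ t i ω) with hm
  have hcont : ∀ i, Continuous (gradient (fi i)) := by
    intro i
    exact (LipschitzWith.of_dist_le_mul (K := ⟨L, hL.le⟩) (fun x y => by
      rw [dist_eq_norm, dist_eq_norm]; exact hlip i x y)).continuous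
  have hmsm : ∀ i, StronglyMeasurable[ℱ t] (m i) := fun i =>
    (hcont i).comp_stronglyMeasurable (hadapt t i)
  have hg2 : ∀ i, MemLp (g t i) 2 P := fun i =>
    (memLp_two_iff_integrable_sq_norm (hgmeas t i).aestronglyMeasurable).2 (hgL2 t i)
  have hm2 : ∀ i, MemLp (m i) 2 P := fun i =>
    ((hg2 i).condExp (m := ℱ t) (by norm_num)).ae_eq (hunb t i)
  set mb : Ω → EuclideanSpace ℝ (Fin d) := fun ω => (n : ℝ)⁻¹ • ∑ j, m j ω with hmb
  have hmbsm : StronglyMeasurable[ℱ t] mb :=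
    (Finset.stronglyMeasurable_fun_sum Finset.univ (fun i _ => hmsm i)).fun_const_smul _
  have hmb2 : MemLp mb 2 P := (memLp_finsetSum Finset.univ (fun i _ => hm2 i)).const_smul ((n : ℝ)⁻¹)
  have hxi2 : ∀ i, MemLp (fun ω => g t i ω - m i ω) 2 P := fun i => (hg2 i).sub (hm2 i)
  have hdi2 : ∀ i, MemLp (fun ω => m i ω - mb ω) 2 P := fun i => (hm2 i).sub hmb2
  have hsq : ∀ {u : Ω → EuclideanSpace ℝ (Fin d)}, MemLp u 2 P →
      Integrable (fun ω => ‖u ω‖ ^ 2) P := fun hu =>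
    (memLp_two_iff_integrable_sq_norm hu.1).1 hu
  have hgb2 : MemLp (fun ω => (n : ℝ)⁻¹ • ∑ j, g t j ω) 2 P :=
    (memLp_finsetSum Finset.univ (fun i _ => hg2 i)).const_smul ((n : ℝ)⁻¹)
  -- the conditional second moment of `g i - mb`
  have hcross : ∀ i, P[(fun ω => inner ℝ (m i ω - mb ω) (g t i ω - m i ω)) | ℱ t] =ᵐ[P] 0 := by
    intro i
    have h1 := condExp_bilin_of_stronglyMeasurable_left (μ := P) (innerSL ℝ)
      ((hmsm i).sub hmbsm) (aux_inner_int (hdi2 i) (hxi2 i))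
      ((hxi2 i).integrable (by norm_num))
    have h2 := condExp_sub ((hg2 i).integrable (by norm_num))
      ((hm2 i).integrable (by norm_num)) (ℱ t)
    have h3 := condExp_of_stronglyMeasurable (μ := P) (hℱ t) (hmsm i)
      ((hm2 i).integrable (by norm_num))
    refine EventuallyEq.trans h1 ?_
    filter_upwards [h2, hunb t i] with ω h2 h4
    have h5 : (P[(fun ω => g t i ω - m i ω) | ℱ t]) ω = 0 := by
      refine Eq.trans h2 ?_
      rw [Pi.sub_apply, h3]
      exact sub_eq_zero.2 h4
    rw [h5]
    simp
  have hterm : ∀ i, P[(fun ω => ‖g t i ω - mb ω‖ ^ 2) | ℱ t] ≤ᵐ[P] fun ω =>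
      σ0 ^ 2 + σ1 ^ 2 * ‖θ t i ω - θstar‖ ^ 2 + ‖m i ω - mb ω‖ ^ 2 := by
    intro i
    have e : (fun ω => ‖g t i ω - mb ω‖ ^ 2) =
        (fun ω => ‖g t i ω - m i ω‖ ^ 2) + ((2 : ℝ) • (fun ω => inner ℝ (m i ω - mb ω) (g t i ω - m i ω)))
        + (fun ω => ‖m i ω - mb ω‖ ^ 2) := by
      funext ω
      simp only [Pi.add_apply, Pi.smul_apply, smul_eq_mul]
      rw [real_inner_comm, ← norm_add_sq_real, sub_add_sub_cancel]
    have i1 := hsq (hxi2 i)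
    have i2 := (aux_inner_int (hdi2 i) (hxi2 i)).smul (2 : ℝ)
    have i3 := hsq (hdi2 i)
    have a1 := condExp_add (i1.add i2) i3 (ℱ t)
    have a2 := condExp_add i1 i2 (ℱ t)
    have a3 := condExp_smul (μ := P) (2 : ℝ)
      (fun ω => (inner ℝ (m i ω - mb ω) (g t i ω - m i ω) : ℝ)) (ℱ t)
    have a4 := condExp_of_stronglyMeasurable (μ := P) (hℱ t)
      (((hmsm i).sub hmbsm).norm.pow 2) i3
    have a4' : P[(fun ω => ‖m i ω - mb ω‖ ^ 2) | ℱ t] = fun ω => ‖m i ω - mb ω‖ ^ 2 := a4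
    rw [e]
    filter_upwards [a1, a2, a3, hcross i, hvar t i] with ω a1 a2 a3 a5 a6
    refine (le_of_eq a1).trans ?_
    rw [Pi.add_apply, a4']
    refine add_le_add_left ((le_of_eq a2).trans ?_) _
    rw [Pi.add_apply]
    refine (add_le_add a6 (le_of_eq a3)).trans ?_
    rw [Pi.smul_apply, a5]
    simp
  have hmono : P[(fun ω => ∑ i, ‖g t i ω - (n : ℝ)⁻¹ • ∑ j, g t j ω‖ ^ 2) | ℱ t] ≤ᵐ[P]
      P[(∑ i, fun ω => ‖g t i ω - mb ω‖ ^ 2) | ℱ t] := by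
    refine condExp_mono (integrable_finsetSum _ fun i _ => hsq ((hg2 i).sub hgb2))
      (integrable_finsetSum' _ fun i _ => hsq ((hg2 i).sub hmb2)) (ae_of_all _ fun ω => ?_)
    simp only [Finset.sum_apply]
    rw [aux_var_min hn (fun i => g t i ω) (mb ω)]
    exact le_add_of_nonneg_right (by positivity)
  have hsum := condExp_finsetSum (μ := P) (s := Finset.univ)
    (f := fun i ω => ‖g t i ω - mb ω‖ ^ 2) (fun i _ => hsq ((hg2 i).sub hmb2)) (ℱ t)
  have hall := ae_all_iff.2 hterm
  filter_upwards [hmono, hsum, hall] with ω h1 h2 h3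
  refine h1.trans ((le_of_eq h2).trans ?_)
  rw [Finset.sum_apply]
  refine (Finset.sum_le_sum fun i _ => h3 i).trans ?_
  rw [Finset.sum_add_distrib, Finset.sum_add_distrib, ← Finset.mul_sum,
    aux_var_min hn (fun i => θ t i ω) θstar]
  simp only [← hθb, ← hC]
  have k1 : ∑ i, ‖m i ω - mb ω‖ ^ 2 ≤ ∑ i, ‖m i ω - gradient f (θb t ω)‖ ^ 2 := by
    rw [aux_var_min hn (fun i => m i ω) (gradient f (θb t ω))]
    exact le_add_of_nonneg_right (by positivity)
  have k2 : ∑ i, ‖m i ω - gradient f (θb t ω)‖ ^ 2 ≤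
      ∑ i, (2 * L ^ 2 * ‖θ t i ω - θb t ω‖ ^ 2 + 2 * ς ^ 2) := by
    refine Finset.sum_le_sum fun i _ => ?_
    have b1 := hlip i (θ t i ω) (θb t ω)
    have b2 := hhet i (θb t ω)
    have b3 : ‖m i ω - gradient f (θb t ω)‖ ≤ L * ‖θ t i ω - θb t ω‖ + ς := by
      refine (norm_sub_le_norm_sub_add_norm_sub _ (gradient (fi i) (θb t ω)) _).trans ?_
      exact add_le_add b1 (by rw [norm_sub_rev]; exact b2)
    have b4 := pow_le_pow_left₀ (norm_nonneg _) b3 2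
    nlinarith [sq_nonneg (L * ‖θ t i ω - θb t ω‖ - ς)]
  rw [Finset.sum_add_distrib, ← Finset.mul_sum, ← hC] at k2
  simp only [Finset.sum_const, Finset.card_univ, Fintype.card_fin, nsmul_eq_mul] at k2 ⊢
  have c0 : 0 ≤ C t ω := by rw [hC]; positivity
  have q1 : 0 ≤ (n : ℝ) * σ0 ^ 2 := by positivity
  have q2 : 0 ≤ σ1 ^ 2 * C t ω := by positivity
  have q3 : 0 ≤ L ^ 2 * C t ω := by positivity
  have q4 : 0 ≤ (n : ℝ) * σ1 ^ 2 * ‖θb t ω - θstar‖ ^ 2 := by positivity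
  nlinarith [k1, k2]
end
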